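/- Let p be a prime, R a nontrivial commutative ring and q ∈ R with (p)_q = 0 and R q-divisible, and let ∂_σ : R[x] → R[x] be the R-linear map with ∂_σ(x^n) = (n)_q·x^{n−1}. Then: (a) the kernel of ∂_σ is exactly the subring R[x^p]; (b) R[x] is the direct sum, as an R-module, of the image ∂_σ(R[x]) and of the free R-submodule with basis {x^{pk+p−1} : k ≥ 0}; equivalently, the classes of the monomials x^{pk+p−1} (k ≥ 0) form an R-basis of coker(∂_σ). (q-deformed Cartier isomorphism for the q-de Rham complex of R[x]: H^0 ≅ R[x^p] and H^1 ≅ Ω^1 of R[x^p].) -/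

import Mathlib

/-!
Since `(a + b)_q = (a)_q + q^a (b)_q`, the condition `(p)_q = 0` makes `(n)_q` vanish for all
multiples `n` of `p`. Conversely, if `(n)_q = 0` with `n` prime to `p`, choose `a n = 1 + b p`; then
`0 = (a n)_q = (b p)_q + q^{b p} = q^{b p} = 1`, which is absurd. Thus `(n)_q = 0` iff `p ∣ n`
(`qInt_eq_zero_iff`), and by `q`-divisibility `(n)_q` is a unit otherwise.

The operator `∂_σ` is diagonal up to a shift of degree: the coefficient of `x^m` in `∂_σ f` is
`(m + 1)_q` times that of `x^{m+1}` in `f` (`coeff_qDeriv`). Hence its kernel consists of the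
polynomials supported in degrees divisible by `p`, and a monomial `x^m` lies in its image when
`p ∤ m + 1`, whereas no polynomial in the image has a term of degree `m` with `p ∣ m + 1`.
-/

/-- The `q`-integer `(n)_q = 1 + q + ⋯ + q^{n-1}`. -/
def qInt {S : Type*} [CommRing S] (q : S) (n : ℕ) : S :=
  ∑ i ∈ Finset.range n, q ^ i

open Polynomial

section QInt

variable {R : Type*} [CommRing R] {q : R} {p : ℕ}

lemma qInt_add (a b : ℕ) : qInt q (a + b) = qInt q a + q ^ a * qInt q b := by
  simp only [qInt, Finset.sum_range_add, Finset.mul_sum, pow_add]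

lemma qInt_mul_eq_zero {n : ℕ} (h : qInt q n = 0) (k : ℕ) : qInt q (n * k) = 0 := by
  induction k with
  | zero => simp [qInt]
  | succ k ih => rw [Nat.mul_succ, qInt_add, ih, h]; simp

lemma pow_eq_one_of_qInt_eq_zero {n : ℕ} (h : qInt q n = 0) : q ^ n = 1 := by
  have h1 := geom_sum_mul q n
  rw [show ∑ i ∈ Finset.range n, q ^ i = 0 from h, zero_mul] at h1
  exact (sub_eq_zero.mp h1.symm)

lemma qInt_eq_zero_iff [Nontrivial R] (hp : p.Prime) (hpq : qInt q p = 0) (n : ℕ) :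
    qInt q n = 0 ↔ p ∣ n := by
  constructor
  · intro hn
    by_contra hpn
    have hco : Nat.Coprime n p := ((Nat.Prime.coprime_iff_not_dvd hp).2 hpn).symm
    obtain ⟨a, -, ha⟩ := Nat.exists_mul_mod_eq_one_of_coprime hco hp.one_lt
    have h0 := qInt_mul_eq_zero hn a
    rw [← Nat.div_add_mod (n * a) p, ha, qInt_add, qInt_mul_eq_zero hpq, pow_mul,
      pow_eq_one_of_qInt_eq_zero hpq] at h0
    simp [qInt] at h0
  · rintro ⟨k, rfl⟩
    exact qInt_mul_eq_zero hpq k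

lemma coeff_qDeriv (D : R[X] →ₗ[R] R[X]) (hD : ∀ n : ℕ, D (X ^ n) = qInt q n • X ^ (n - 1))
    (f : R[X]) (m : ℕ) : (D f).coeff m = qInt q (m + 1) * f.coeff (m + 1) := by
  induction f using Polynomial.induction_on' with
  | add f g hf hg => simp [hf, hg, mul_add]
  | monomial n a =>
    rw [← C_mul_X_pow_eq_monomial, ← smul_eq_C_mul, map_smul, hD]
    rcases n with _ | n
    · simp [qInt, coeff_one]
    · by_cases h : m = n
      · subst h; simp [mul_comm]
      · simp [coeff_X_pow, h]

lemma mem_adjoin_X_pow_iff (hp : 0 < p) (f : R[X]) :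
    f ∈ Algebra.adjoin R {(X : R[X]) ^ p} ↔ ∀ n, ¬ p ∣ n → f.coeff n = 0 := by
  rw [Algebra.adjoin_singleton_eq_range_aeval]
  constructor
  · rintro ⟨g, rfl⟩ n hn
    change (aeval (X ^ p) g).coeff n = 0
    rw [← expand_aeval, aeval_X_left_apply, coeff_expand hp, if_neg hn]
  · intro h
    refine ⟨contract p f, ?_⟩
    change aeval (X ^ p) (contract p f) = f
    rw [← expand_aeval, aeval_X_left_apply]
    ext n
    rw [coeff_expand hp]
    split_ifs with hn
    · rw [coeff_contract hp.ne', Nat.div_mul_cancel hn]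
    · exact (h n hn).symm

end QInt

/-- `q`-deformed Cartier isomorphism for the `q`-de Rham complex of
`R[x]`: let `p` be a prime, `R` a nontrivial commutative ring, `q ∈ R` with `(p)_q = 0`
and `R` `q`-divisible, and `∂_σ : R[x] → R[x]` the `R`-linear map with
`∂_σ(x^n) = (n)_q·x^{n−1}`.  Then:
(a) `ker ∂_σ` is exactly the subring `R[x^p]`;
(b) `R[x]` is the direct sum, as an `R`-module, of `im ∂_σ` and of the free `R`-submodule
with basis `{x^{pk+p−1} : k ≥ 0}`. -/
theorem q_cartier_isomorphism
    (p : ℕ) (hp : p.Prime)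
    (R : Type*) [CommRing R] [Nontrivial R] (q : R)
    (hpq : qInt q p = 0)
    (hdiv : ∀ m : ℕ, 1 ≤ m → qInt q m ≠ 0 → IsUnit (qInt q m))
    (D : Polynomial R →ₗ[R] Polynomial R)
    (hD : ∀ n : ℕ, D (Polynomial.X ^ n) = qInt q n • Polynomial.X ^ (n - 1)) :
    -- (a) the kernel of `∂_σ` is `R[x^p]`
    (∀ f : Polynomial R, D f = 0 ↔
      f ∈ Algebra.adjoin R {(Polynomial.X : Polynomial R) ^ p}) ∧
    -- (b) the monomials `x^{pk+p−1}` are linearly independent over `R` and span a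
    -- complement of the image of `∂_σ`
    LinearIndependent R (fun k : ℕ => (Polynomial.X : Polynomial R) ^ (p * k + p - 1)) ∧
    IsCompl (LinearMap.range D)
      (Submodule.span R
        (Set.range fun k : ℕ => (Polynomial.X : Polynomial R) ^ (p * k + p - 1))) := by
  have hz := qInt_eq_zero_iff hp hpq
  have hc := coeff_qDeriv D hD
  have hpos := hp.pos
  have hu : ∀ m : ℕ, ¬ p ∣ m → IsUnit (qInt q m) := fun m hm =>
    hdiv m (Nat.pos_of_ne_zero (by rintro rfl; simp at hm)) (fun h => hm ((hz m).1 h))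
  have hsucc : ∀ k : ℕ, p * k + p - 1 + 1 = p * (k + 1) := fun k => by
    rw [Nat.mul_succ]; omega
  refine ⟨fun f => ?_, ?_, ?_, ?_⟩
  · rw [mem_adjoin_X_pow_iff hpos]
    constructor
    · intro hf n hn
      obtain ⟨m, rfl⟩ : ∃ m, n = m + 1 :=
        Nat.exists_eq_succ_of_ne_zero (by rintro rfl; simp at hn)
      have h := hc f m
      rw [hf, coeff_zero] at h
      exact (hu _ hn).mul_right_eq_zero.1 h.symm
    · intro hf
      ext m
      rw [hc, coeff_zero]
      by_cases hm : p ∣ m + 1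
      · rw [(hz _).2 hm, zero_mul]
      · rw [hf _ hm, mul_zero]
  · have hinj : Function.Injective fun k : ℕ => p * k + p - 1 := by
      intro a b hab
      have h : p * (a + 1) = p * (b + 1) := by
        rw [← hsucc, ← hsucc]; exact congrArg (· + 1) hab
      exact Nat.succ_injective (Nat.eq_of_mul_eq_mul_left hpos h)
    convert (basisMonomials R).linearIndependent.comp _ hinj using 1
    ext1 k
    simp [X_pow_eq_monomial]
  · rw [Submodule.disjoint_def]
    rintro _ ⟨f, rfl⟩ hf
    -- Elements of the span are supported in degrees `m` with `p ∣ m + 1`.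
    have hspan : ∀ g ∈ Submodule.span R
        (Set.range fun k : ℕ => (X : R[X]) ^ (p * k + p - 1)),
        ∀ m, ¬ p ∣ m + 1 → g.coeff m = 0 := by
      intro g hg m hm
      induction hg using Submodule.span_induction with
      | mem x hx =>
        obtain ⟨k, rfl⟩ := hx
        refine (coeff_X_pow _ _).trans (if_neg ?_)
        rintro rfl
        exact hm (hsucc k ▸ dvd_mul_right _ _)
      | zero => simp
      | add x y _ _ hx hy => simp [hx, hy]
      | smul a x _ hx => simp [hx]
    ext m
    rw [coeff_zero]
    by_cases hm : p ∣ m + 1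
    · rw [hc, (hz _).2 hm, zero_mul]
    · exact hspan _ hf m hm
  · rw [codisjoint_iff, eq_top_iff]
    rintro f -
    induction f using Polynomial.induction_on' with
    | add f g hf hg => exact add_mem hf hg
    | monomial m a =>
      rw [← C_mul_X_pow_eq_monomial, ← smul_eq_C_mul]
      refine Submodule.smul_mem _ a ?_
      by_cases hm : p ∣ m + 1
      · refine Submodule.mem_sup_right (Submodule.subset_span ?_)
        obtain ⟨k, hk⟩ := hm
        obtain ⟨j, rfl⟩ : ∃ j, k = j + 1 :=
          Nat.exists_eq_succ_of_ne_zero (by rintro rfl; simp at hk)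
        refine ⟨j, congrArg (X ^ ·) ?_⟩
        have := hsucc j
        omega
      · refine Submodule.mem_sup_left ?_
        obtain ⟨u, hu⟩ := hu _ hm
        refine ⟨(↑u⁻¹ : R) • X ^ (m + 1), ?_⟩
        rw [map_smul, hD, ← hu, smul_smul, Units.inv_mul, one_smul, Nat.add_sub_cancel]
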